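/- Local asymptotic mixed normality expansion in the superdiffusive regime: let 3/4 < p < 1 and let (h_n) be a sequence of real numbers converging to a real number h. Then, almost surely, the log-likelihood ratio satisfies Λ_n(p + h_n·n^{−(4p−3)/2}) − Λ_n(p) = h_n·Δ_n(p) − (h_n²/2)·J_n(p) + o(1) as n → ∞, where Δ_n(p) = 2 P_n/n^{(4p−3)/2} and J_n(p) = V_n/n^{4p−3}. -/

import Mathlib

open MeasureTheory ProbabilityTheory Filter Finset
open scoped BoundedContinuousFunction ENNReal NNReal Topology

noncomputable section

variable {Ω : Type*}

/-- Position of the elephant random walk: `S n = X 1 + ⋯ + X n`. -/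
def erwS (X : ℕ → Ω → ℝ) (n : ℕ) (ω : Ω) : ℝ :=
  ∑ k ∈ Finset.Icc 1 n, X k ω

/-- `V n = 4 ∑_{k=1}^{n-1} (S k / k)²`, the approximate conditional Fisher information. -/
def erwV (X : ℕ → Ω → ℝ) (n : ℕ) (ω : Ω) : ℝ :=
  4 * ∑ k ∈ Finset.Icc 1 (n - 1), (erwS X k ω / k) ^ 2

/-- The quasi-maximum likelihood estimator `p̂ n` of the memory parameter. -/
def erwPhat (X : ℕ → Ω → ℝ) (n : ℕ) (ω : Ω) : ℝ :=
  (∑ k ∈ Finset.Icc 1 (n - 1), (erwS X k ω / k) * (X (k + 1) ω + erwS X k ω / k)) /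
    (2 * ∑ k ∈ Finset.Icc 1 (n - 1), (erwS X k ω / k) ^ 2)

/-- The elephant random walk hypotheses with memory parameter `p ∈ [0,1]`:
the steps take values in `{-1, 1}`, are adapted to the filtration `ℱ`
(which plays the role of `σ(X_1, …, X_n)`), and
`E[X_{n+1} | ℱ_n] = (2p - 1) · S_n / n` almost surely. -/
def IsERW {m0 : MeasurableSpace Ω} (μ : Measure Ω) (ℱ : Filtration ℕ m0)
    (X : ℕ → Ω → ℝ) (p : ℝ) : Prop :=
  0 ≤ p ∧ p ≤ 1 ∧
  (∀ n, 1 ≤ n → ∀ ω, X n ω = 1 ∨ X n ω = -1) ∧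
  (∀ n, 1 ≤ n → Measurable[ℱ n] (X n)) ∧
  (∀ n, 1 ≤ n → μ[X (n + 1) | ℱ n] =ᵐ[μ] fun ω => (2 * p - 1) * (erwS X n ω / n))

/-- The score-type martingale `P n = ∑_{k=1}^{n-1} (S k / k) ε_{k+1} / (1 - a² (S k / k)²)`. -/
def erwP (X : ℕ → Ω → ℝ) (a : ℝ) (n : ℕ) (ω : Ω) : ℝ :=
  ∑ k ∈ Finset.Icc 1 (n - 1),
    (erwS X k ω / k) * (X (k + 1) ω - a * (erwS X k ω / k)) /
      (1 - a ^ 2 * (erwS X k ω / k) ^ 2)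

/-- The log-likelihood function (up to an additive term independent of `u`). -/
def erwLogLik (X : ℕ → Ω → ℝ) (u : ℝ) (n : ℕ) (ω : Ω) : ℝ :=
  ∑ k ∈ Finset.Icc 1 (n - 1),
    ((1 + X (k + 1) ω) / 2 * Real.log ((1 + (2 * u - 1) * (erwS X k ω / k)) / 2) +
      (1 - X (k + 1) ω) / 2 * Real.log ((1 - (2 * u - 1) * (erwS X k ω / k)) / 2))

/-!
Write `a = 2 p - 1`. Each term of the log-likelihood is `log (1 + a w)` with `w = ± S_k / k`, and a
second order Taylor expansion at `a` leaves an error of order `d² |S_k / k| ^ 3` for a displacement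
`d` of `p`. Since `d = O(n ^ (-(4 p - 3) / 2))`, the claim reduces to
`∑_{k < n} |S_k / k| ^ 3 = o(n ^ (4 p - 3))` almost surely. Now `S` divided by its mean growth
factor `∏_{k < n} (1 + a / k)`, which is of order `n ^ a`, is a martingale, and it is bounded in
`L²` because `E[S_{n+1}²] = (1 + 2 a / n) E[S_n²] + 1` with `2 a > 1` forces
`E[S_n²] = O(n ^ (2 a))`. Martingale convergence thus gives `S_k = O(k ^ a)` almost surely, and
Kronecker's lemma applied to `|S_k / k| ^ 3 = O(k ^ (4 p - 3) k ^ (a - 2))` with `a - 2 < -1`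
concludes.
-/

open Asymptotics

section Analysis

lemma abs_log_one_add_sub_le {y : ℝ} (hy : |y| ≤ 1 / 2) :
    |Real.log (1 + y) - (y - y ^ 2 / 2)| ≤ 2 * |y| ^ 3 := by
  have htaylor := Real.abs_log_sub_add_sum_range_le (x := -y) (by rw [abs_neg]; linarith) 2
  have hsum : ∑ i ∈ range 2, (-y) ^ (i + 1) / ((i : ℝ) + 1) + Real.log (1 - -y) =
      Real.log (1 + y) - (y - y ^ 2 / 2) := by
    simp only [sum_range_succ, sum_range_zero, sub_neg_eq_add]
    push_cast
    ring
  rw [hsum, abs_neg] at htaylor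
  refine htaylor.trans ?_
  rw [div_le_iff₀ (by linarith)]
  change |y| ^ 3 ≤ _
  nlinarith only [mul_le_mul_of_nonneg_left hy (pow_nonneg (abs_nonneg y) 3)]

lemma one_sub_abs_le_one_add_mul {a w : ℝ} (hw : |w| ≤ 1) : 1 - |a| ≤ 1 + a * w := by
  have : |a * w| ≤ |a| := by rw [abs_mul]; exact mul_le_of_le_one_right (abs_nonneg a) hw
  linarith [neg_abs_le (a * w)]

lemma abs_sq_sub_div_one_add_mul_sq_le {a w : ℝ} (ha : |a| < 1) (hw : |w| ≤ 1) :
    |w ^ 2 - (w / (1 + a * w)) ^ 2| ≤ 3 / (1 - |a|) ^ 2 * |w| ^ 3 := by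
  have hgap : 0 < 1 - |a| := sub_pos.2 ha
  have hden : 1 - |a| ≤ 1 + a * w := one_sub_abs_le_one_add_mul hw
  have hden0 : 0 < 1 + a * w := hgap.trans_le hden
  have haw : |a * w| ≤ |w| := by
    rw [abs_mul]; exact mul_le_of_le_one_left (abs_nonneg w) ha.le
  have htwo : |2 + a * w| ≤ 3 := by
    rw [abs_le]; constructor <;> linarith [le_abs_self (a * w)]
  calc |w ^ 2 - (w / (1 + a * w)) ^ 2| = |w ^ 2 * (a * w * (2 + a * w)) / (1 + a * w) ^ 2| := by
        congr 1
        rw [div_pow, eq_div_iff (by positivity), sub_mul, div_mul_cancel₀ _ (by positivity)]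
        ring
    _ = |w| ^ 2 * (|a * w| * |2 + a * w|) / (1 + a * w) ^ 2 := by
        rw [abs_div, abs_mul, abs_mul (a * w), abs_pow, abs_pow, abs_of_pos hden0]
    _ ≤ |w| ^ 2 * (|w| * 3) / (1 - |a|) ^ 2 := by gcongr
    _ = 3 / (1 - |a|) ^ 2 * |w| ^ 3 := by ring

lemma abs_log_add_sub_log_sub_le {a t w : ℝ} (ha : |a| < 1) (hw : |w| ≤ 1)
    (ht : |t| ≤ (1 - |a|) / 2) :
    |Real.log (1 + (a + t) * w) - Real.log (1 + a * w) -
        (t * (w / (1 + a * w)) - t ^ 2 * w ^ 2 / 2)| ≤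
      5 / 2 / (1 - |a|) ^ 2 * (t ^ 2 * |w| ^ 3) := by
  have hgap : 0 < 1 - |a| := sub_pos.2 ha
  have hden : 1 - |a| ≤ 1 + a * w := one_sub_abs_le_one_add_mul hw
  have hden0 : 0 < 1 + a * w := hgap.trans_le hden
  set v := w / (1 + a * w) with hv
  have htv : |t * v| ≤ |t| * |w| / (1 - |a|) := by
    rw [hv, ← mul_div_assoc, abs_div, abs_mul, abs_of_pos hden0]
    gcongr
  have htv_half : |t * v| ≤ |w| / 2 := by
    refine htv.trans ?_
    rw [div_le_iff₀ hgap]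
    nlinarith [abs_nonneg w]
  have hlog : Real.log (1 + (a + t) * w) = Real.log (1 + a * w) + Real.log (1 + t * v) := by
    rw [← Real.log_mul hden0.ne' (by linarith [neg_abs_le (t * v)]), hv]
    congr 1
    field_simp
    ring
  have hcubic : 2 * |t * v| ^ 3 ≤ 1 / (1 - |a|) ^ 2 * (t ^ 2 * |w| ^ 3) :=
    calc 2 * |t * v| ^ 3 = 2 * (|t * v| ^ 2 * |t * v|) := by ring
      _ ≤ 2 * ((|t| * |w| / (1 - |a|)) ^ 2 * (|w| / 2)) := by gcongr
      _ = 1 / (1 - |a|) ^ 2 * (|t| ^ 2 * |w| ^ 3) := by field_simp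
      _ = _ := by rw [sq_abs]
  calc _ = |(Real.log (1 + t * v) - (t * v - (t * v) ^ 2 / 2)) + t ^ 2 / 2 * (w ^ 2 - v ^ 2)| := by
        rw [hlog]; congr 1; ring
    _ ≤ |Real.log (1 + t * v) - (t * v - (t * v) ^ 2 / 2)| + |t ^ 2 / 2 * (w ^ 2 - v ^ 2)| :=
        abs_add_le _ _
    _ ≤ 2 * |t * v| ^ 3 + t ^ 2 / 2 * (3 / (1 - |a|) ^ 2 * |w| ^ 3) := by
        rw [abs_mul, abs_of_nonneg (by positivity : 0 ≤ t ^ 2 / 2)]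
        gcongr
        · exact abs_log_one_add_sub_le (by linarith)
        · exact abs_sq_sub_div_one_add_mul_sq_le ha hw
    _ ≤ 1 / (1 - |a|) ^ 2 * (t ^ 2 * |w| ^ 3) + t ^ 2 / 2 * (3 / (1 - |a|) ^ 2 * |w| ^ 3) := by
        gcongr
    _ = _ := by ring

/-- Kronecker's lemma for an absolutely convergent series. -/
lemma isLittleO_sum_range_smul {E : Type*} [NormedAddCommGroup E] [NormedSpace ℝ E]
    {b : ℕ → ℝ} {g : ℕ → E} (hb0 : ∀ n, 0 ≤ b n) (hb : Monotone b) (hblim : Tendsto b atTop atTop)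
    (hg : Summable fun k => ‖g k‖) :
    (fun n => ∑ k ∈ range n, b k • g k) =o[atTop] b := by
  have hterm : ∀ k, Tendsto (fun n => b k * ‖g k‖ / b n) atTop (𝓝 0) :=
    fun k => hblim.const_div_atTop _
  have hdom : Tendsto (fun n => ∑' k, if k < n then b k * ‖g k‖ / b n else 0) atTop
      (𝓝 (∑' _ : ℕ, (0 : ℝ))) := by
    refine tendsto_tsum_of_dominated_convergence hg (fun k => ?_) (.of_forall fun n k => ?_)
    · refine (hterm k).congr' ?_
      filter_upwards [eventually_gt_atTop k] with n hkn
      rw [if_pos hkn]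
    · split_ifs with hkn
      · have := hb0 k
        have := hb0 n
        rw [Real.norm_of_nonneg (by positivity), mul_div_right_comm]
        exact mul_le_of_le_one_left (norm_nonneg _) (div_le_one_of_le₀ (hb hkn.le) this)
      · simp
  rw [tsum_zero] at hdom
  have hnorm : (fun n => ∑ k ∈ range n, b k * ‖g k‖) =o[atTop] b := by
    refine (isLittleO_iff_tendsto' ?_).2 (hdom.congr fun n => ?_)
    · filter_upwards [hblim.eventually_gt_atTop 0] with n hn h0
      exact absurd h0 hn.ne'
    · rw [tsum_eq_sum (s := range n) fun k hk => if_neg (mem_range.not.1 hk), sum_div]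
      exact sum_congr rfl fun k hk => if_pos (mem_range.1 hk)
  refine IsBigO.trans_isLittleO (.of_norm_le fun n => ?_) hnorm
  refine (norm_sum_le _ _).trans_eq (sum_congr rfl fun k _ => ?_)
  rw [norm_smul, Real.norm_of_nonneg (hb0 k)]

lemma isLittleO_sum_abs_div_pow_three {s : ℕ → ℝ} {a C : ℝ} (ha : 1 / 2 < a) (ha' : a < 1)
    (hs : ∀ n, |s n| ≤ C * (n : ℝ) ^ a) :
    (fun n : ℕ => ∑ k ∈ Icc 1 (n - 1), |s k / k| ^ 3) =o[atTop]
      fun n : ℕ => (n : ℝ) ^ (2 * a - 1) := by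
  have hpow : 0 < 2 * a - 1 := by linarith
  have hkronecker : (fun n : ℕ => ∑ k ∈ range n, (k : ℝ) ^ (2 * a - 1) • (k : ℝ) ^ (a - 2))
      =o[atTop] fun n : ℕ => (n : ℝ) ^ (2 * a - 1) := by
    refine isLittleO_sum_range_smul (fun n => by positivity)
      (fun m n hmn => Real.rpow_le_rpow (by positivity) (by exact_mod_cast hmn) hpow.le)
      ((tendsto_rpow_atTop hpow).comp tendsto_natCast_atTop_atTop) ?_
    exact (Real.summable_nat_rpow.2 (by linarith)).norm
  have hterm : ∀ k : ℕ, 1 ≤ k →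
      |s k / k| ^ 3 ≤ C ^ 3 * ((k : ℝ) ^ (2 * a - 1) • (k : ℝ) ^ (a - 2)) := by
    intro k hk
    have hk0 : (0 : ℝ) < k := by exact_mod_cast hk
    calc |s k / k| ^ 3 ≤ (C * (k : ℝ) ^ a / k) ^ 3 := by
          rw [abs_div, Nat.abs_cast]; gcongr; exact hs k
      _ = (C * (k : ℝ) ^ (a - 1)) ^ 3 := by rw [Real.rpow_sub_one hk0.ne', mul_div_assoc]
      _ = C ^ 3 * ((k : ℝ) ^ (2 * a - 1) • (k : ℝ) ^ (a - 2)) := by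
          rw [mul_pow, ← Real.rpow_mul_natCast hk0.le, smul_eq_mul, ← Real.rpow_add hk0]
          congr 2
          push_cast
          ring
  have hC : 0 ≤ C := by simpa using (abs_nonneg _).trans (hs 1)
  refine IsBigO.trans_isLittleO (.of_bound (C ^ 3) (.of_forall fun n => ?_)) hkronecker
  rw [Real.norm_of_nonneg (by positivity),
    Real.norm_of_nonneg (sum_nonneg fun k _ => by positivity), mul_sum]
  refine (sum_le_sum fun k hk => hterm k (mem_Icc.1 hk).1).trans
    (sum_le_sum_of_subset_of_nonneg (fun k hk => ?_) fun k _ _ => by positivity)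
  rw [mem_Icc] at hk
  exact mem_range.2 (by omega)

lemma natCast_rpow_mul_one_add_div_le {q : ℝ} (hq : 1 ≤ q) {n : ℕ} (hn : n ≠ 0) :
    (n : ℝ) ^ q * (1 + q / n) ≤ ((n + 1 : ℕ) : ℝ) ^ q := by
  have hn0 : (0 : ℝ) < n := by positivity
  calc (n : ℝ) ^ q * (1 + q / n) = (n : ℝ) ^ q * (1 + q * (1 / n)) := by ring
    _ ≤ (n : ℝ) ^ q * (1 + 1 / n) ^ q := by
        gcongr
        exact one_add_mul_self_le_rpow_one_add (by linarith [one_div_pos.2 hn0]) hq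
    _ = ((n + 1 : ℕ) : ℝ) ^ q := by
        rw [← Real.mul_rpow hn0.le (by positivity)]
        congr 1
        push_cast
        field_simp

lemma natCast_succ_rpow_le_mul_one_add_div {q : ℝ} (hq : 0 ≤ q) (hq' : q ≤ 1) {n : ℕ} (hn : n ≠ 0) :
    ((n + 1 : ℕ) : ℝ) ^ q ≤ (n : ℝ) ^ q * (1 + q / n) := by
  have hn0 : (0 : ℝ) < n := by positivity
  calc ((n + 1 : ℕ) : ℝ) ^ q = (n : ℝ) ^ q * (1 + 1 / n) ^ q := by
        rw [← Real.mul_rpow hn0.le (by positivity)]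
        congr 1
        push_cast
        field_simp
    _ ≤ (n : ℝ) ^ q * (1 + q * (1 / n)) := by
        gcongr
        exact rpow_one_add_le_one_add_mul_self (by linarith [one_div_pos.2 hn0]) hq hq'
    _ = (n : ℝ) ^ q * (1 + q / n) := by ring

lemma le_mul_rpow_of_le_one_add_div_mul_add {u : ℕ → ℝ} {q c : ℝ} (hq : 1 < q) (hc : 0 ≤ c)
    (h1 : 0 ≤ u 1) (hu : ∀ n, 1 ≤ n → u (n + 1) ≤ (1 + q / n) * u n + c) {n : ℕ} (hn : 1 ≤ n) :
    u n ≤ (u 1 + c / (q - 1)) * (n : ℝ) ^ q := by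
  have hq1 : 0 < q - 1 := by linarith
  set D := c / (q - 1)
  have hDq : D * (q - 1) = c := div_mul_cancel₀ c hq1.ne'
  have hD0 : 0 ≤ D := by positivity
  have hstrong : u n ≤ (u 1 + D) * (n : ℝ) ^ q - D * n := by
    induction n, hn using Nat.le_induction with
    | base => simp
    | succ n hn ih =>
      have hn0 : (0 : ℝ) < n := by exact_mod_cast hn
      calc u (n + 1) ≤ (1 + q / n) * u n + c := hu n hn
        _ ≤ (1 + q / n) * ((u 1 + D) * (n : ℝ) ^ q - D * n) + c := by gcongr
        _ = (u 1 + D) * ((n : ℝ) ^ q * (1 + q / n)) - D * ((n + 1 : ℕ) : ℝ) := by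
            rw [← hDq]; push_cast; field_simp; ring
        _ ≤ _ := by gcongr; exact natCast_rpow_mul_one_add_div_le hq.le (by omega)
  exact hstrong.trans (sub_le_self _ (by positivity))

/-- The factor `(1 + a / 1) ⋯ (1 + a / n)` by which the mean of the walk grows between times `1` and
`n + 1`; dividing by it turns the walk into a martingale. -/
def erwGrowth (a : ℝ) (n : ℕ) : ℝ :=
  ∏ k ∈ range n, (1 + a / (k + 1 : ℕ))

lemma erwGrowth_pos {a : ℝ} (ha : 0 ≤ a) (n : ℕ) : 0 < erwGrowth a n :=
  prod_pos fun _ _ => by positivity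

lemma rpow_le_erwGrowth {a : ℝ} (ha : 0 ≤ a) (ha' : a ≤ 1) (n : ℕ) :
    ((n + 1 : ℕ) : ℝ) ^ a ≤ erwGrowth a n := by
  induction n with
  | zero => simp [erwGrowth]
  | succ n ih =>
    rw [erwGrowth, prod_range_succ, ← erwGrowth]
    exact (natCast_succ_rpow_le_mul_one_add_div ha ha' n.succ_ne_zero).trans (by gcongr)

lemma erwGrowth_le_exp_mul_rpow {a : ℝ} (ha : 0 ≤ a) (n : ℕ) :
    erwGrowth a n ≤ Real.exp a * ((n + 1 : ℕ) : ℝ) ^ a := by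
  have hharmonic : ∑ k ∈ range n, a / ((k + 1 : ℕ) : ℝ) ≤ a * (1 + Real.log (n + 1 : ℕ)) :=
    calc ∑ k ∈ range n, a / ((k + 1 : ℕ) : ℝ) ≤ ∑ k ∈ range (n + 1), a / ((k + 1 : ℕ) : ℝ) :=
          sum_le_sum_of_subset_of_nonneg (range_mono n.le_succ) fun k _ _ => by positivity
      _ = a * (harmonic (n + 1) : ℝ) := by
          rw [harmonic, Rat.cast_sum, mul_sum]
          exact sum_congr rfl fun k _ => by push_cast; ring
      _ ≤ _ := by gcongr; exact harmonic_le_one_add_log (n + 1)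
  calc erwGrowth a n ≤ ∏ k ∈ range n, Real.exp (a / (k + 1 : ℕ)) :=
        prod_le_prod (fun k _ => by positivity) fun k _ => by
          rw [add_comm]; exact Real.add_one_le_exp _
    _ = Real.exp (∑ k ∈ range n, a / (k + 1 : ℕ)) := (Real.exp_sum _ _).symm
    _ ≤ Real.exp (a * (1 + Real.log (n + 1 : ℕ))) := Real.exp_le_exp.2 hharmonic
    _ = Real.exp a * ((n + 1 : ℕ) : ℝ) ^ a := by
        rw [Real.rpow_def_of_pos (by positivity), ← Real.exp_add]
        ring_nf

end Analysis

section Martingale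

variable {m0 : MeasurableSpace Ω} {μ : Measure Ω}

/-- The filtration `ℱ` with time shifted by one, so that its time `0` is time `1` of `ℱ`. -/
def shiftedFiltration (ℱ : Filtration ℕ m0) : Filtration ℕ m0 where
  seq n := ℱ (n + 1)
  mono' _ _ hmn := ℱ.mono (Nat.succ_le_succ hmn)
  le' n := ℱ.le (n + 1)

lemma martingale_inv_prod_smul [IsFiniteMeasure μ] {𝒢 : Filtration ℕ m0} {Z : ℕ → Ω → ℝ}
    {c : ℕ → ℝ} (hc : ∀ n, c n ≠ 0) (hadapted : StronglyAdapted 𝒢 Z)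
    (hint : ∀ n, Integrable (Z n) μ)
    (hcond : ∀ n, μ[Z (n + 1) | 𝒢 n] =ᵐ[μ] c n • Z n) :
    Martingale (fun n => (∏ k ∈ range n, c k)⁻¹ • Z n) 𝒢 μ := by
  refine martingale_nat (fun n => (hadapted n).const_smul _) (fun n => (hint n).smul _) fun n => ?_
  filter_upwards [condExp_smul (∏ k ∈ range (n + 1), c k)⁻¹ (Z (n + 1)) (𝒢 n), hcond n]
    with ω hsmul hω
  rw [hsmul, Pi.smul_apply, Pi.smul_apply, hω, Pi.smul_apply, smul_smul, prod_range_succ, mul_inv,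
    inv_mul_cancel_right₀ (hc n)]

lemma ae_exists_forall_abs_le_of_martingale [IsFiniteMeasure μ] {𝒢 : Filtration ℕ m0}
    {M : ℕ → Ω → ℝ} (hM : Martingale M 𝒢 μ) (hint : ∀ n, Integrable (fun ω => M n ω ^ 2) μ) {R : ℝ}
    (hR : ∀ n, ∫ ω, M n ω ^ 2 ∂μ ≤ R) :
    ∀ᵐ ω ∂μ, ∃ C, ∀ n, |M n ω| ≤ C := by
  have hL1 : ∀ n, eLpNorm (M n) 1 μ ≤ (μ.real Set.univ + R).toNNReal := by
    intro n
    rw [eLpNorm_one_eq_lintegral_enorm, ← ofReal_integral_norm_eq_lintegral_enorm (hM.integrable n)]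
    refine ENNReal.ofReal_le_ofReal ?_
    calc ∫ ω, ‖M n ω‖ ∂μ ≤ ∫ ω, (1 + M n ω ^ 2) ∂μ :=
          integral_mono (hM.integrable n).norm ((integrable_const 1).add (hint n)) fun ω => by
            rw [Real.norm_eq_abs, ← sq_abs]
            nlinarith [sq_nonneg (|M n ω| - 1)]
      _ = μ.real Set.univ + ∫ ω, M n ω ^ 2 ∂μ := by
          rw [integral_add (integrable_const 1) (hint n), integral_const, smul_eq_mul, mul_one]
      _ ≤ _ := by gcongr; exact hR n
  filter_upwards [hM.submartingale.ae_tendsto_limitProcess hL1] with ω hω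
  obtain ⟨C, hC⟩ := hω.abs.bddAbove_range
  exact ⟨C, fun n => hC ⟨n, rfl⟩⟩

end Martingale

section Path

variable {X : ℕ → Ω → ℝ} {ω : Ω}

lemma erwS_succ (X : ℕ → Ω → ℝ) (n : ℕ) (ω : Ω) :
    erwS X (n + 1) ω = erwS X n ω + X (n + 1) ω :=
  sum_Icc_succ_top (by omega) _

lemma abs_erwS_le (hX : ∀ n, 1 ≤ n → X n ω = 1 ∨ X n ω = -1) (n : ℕ) : |erwS X n ω| ≤ n := by
  calc |erwS X n ω| ≤ ∑ k ∈ Icc 1 n, |X k ω| := abs_sum_le_sum_abs _ _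
    _ = ∑ k ∈ Icc 1 n, 1 := sum_congr rfl fun k hk => by
        rcases hX k (mem_Icc.1 hk).1 with h | h <;> simp [h]
    _ = n := by simp

/-- The regressor `S k / k` multiplied by the next step `X (k + 1)`. As the steps are `±1`, the
log-likelihood, the score and the information depend on the path only through these products. -/
def erwSignedMean (X : ℕ → Ω → ℝ) (k : ℕ) (ω : Ω) : ℝ :=
  X (k + 1) ω * (erwS X k ω / k)

lemma abs_erwSignedMean (hX : ∀ n, 1 ≤ n → X n ω = 1 ∨ X n ω = -1) (k : ℕ) :
    |erwSignedMean X k ω| = |erwS X k ω / k| := by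
  rcases hX (k + 1) (by omega) with h | h <;> simp [erwSignedMean, h]

lemma abs_erwSignedMean_le_one (hX : ∀ n, 1 ≤ n → X n ω = 1 ∨ X n ω = -1) (k : ℕ) :
    |erwSignedMean X k ω| ≤ 1 := by
  rw [abs_erwSignedMean hX, abs_div, Nat.abs_cast]
  exact div_le_one_of_le₀ (abs_erwS_le hX k) k.cast_nonneg

lemma erwLogLik_eq_sum_erwSignedMean (hX : ∀ n, 1 ≤ n → X n ω = 1 ∨ X n ω = -1) {u : ℝ}
    (hu : |2 * u - 1| < 1) (n : ℕ) :
    erwLogLik X u n ω =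
      ∑ k ∈ Icc 1 (n - 1), (Real.log (1 + (2 * u - 1) * erwSignedMean X k ω) - Real.log 2) := by
  refine sum_congr rfl fun k _ => ?_
  have hpos : 0 < 1 + (2 * u - 1) * erwSignedMean X k ω :=
    (sub_pos.2 hu).trans_le (one_sub_abs_le_one_add_mul (abs_erwSignedMean_le_one hX k))
  rw [← Real.log_div hpos.ne' two_ne_zero]
  rcases hX (k + 1) (by omega) with h | h <;> simp [erwSignedMean, h, sub_eq_add_neg]

lemma erwP_eq_sum_erwSignedMean (hX : ∀ n, 1 ≤ n → X n ω = 1 ∨ X n ω = -1) {a : ℝ} (ha : |a| < 1)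
    (n : ℕ) :
    erwP X a n ω = ∑ k ∈ Icc 1 (n - 1), erwSignedMean X k ω / (1 + a * erwSignedMean X k ω) := by
  refine sum_congr rfl fun k _ => ?_
  have hw := abs_erwSignedMean_le_one hX k
  have hplus : 1 + a * erwSignedMean X k ω ≠ 0 :=
    ((sub_pos.2 ha).trans_le (one_sub_abs_le_one_add_mul hw)).ne'
  have hminus : 1 - a * erwSignedMean X k ω ≠ 0 := by
    rw [sub_eq_add_neg, ← neg_mul]
    refine ((sub_pos.2 ?_).trans_le (one_sub_abs_le_one_add_mul hw)).ne'
    rwa [abs_neg]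
  have hsq : X (k + 1) ω ^ 2 = 1 := by rcases hX (k + 1) (by omega) with h | h <;> simp [h]
  have hfactor : 1 - a ^ 2 * (erwS X k ω / k) ^ 2 =
      (1 + a * erwSignedMean X k ω) * (1 - a * erwSignedMean X k ω) := by
    simp only [erwSignedMean]
    linear_combination a ^ 2 * (erwS X k ω / k) ^ 2 * hsq
  rw [hfactor, div_eq_div_iff (mul_ne_zero hplus hminus) hplus]
  simp only [erwSignedMean]
  linear_combination a * (erwS X k ω / k) ^ 2 * (1 + a * (X (k + 1) ω * (erwS X k ω / k))) * hsq

lemma erwV_eq_sum_erwSignedMean (hX : ∀ n, 1 ≤ n → X n ω = 1 ∨ X n ω = -1) (n : ℕ) :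
    erwV X n ω = 4 * ∑ k ∈ Icc 1 (n - 1), erwSignedMean X k ω ^ 2 := by
  refine congrArg (4 * ·) (sum_congr rfl fun k _ => ?_)
  rw [← sq_abs, ← abs_erwSignedMean hX, sq_abs]

lemma abs_erwLogLik_add_sub_le (hX : ∀ n, 1 ≤ n → X n ω = 1 ∨ X n ω = -1) {p d : ℝ}
    (hp : |2 * p - 1| < 1) (hd : |d| ≤ (1 - |2 * p - 1|) / 4) (n : ℕ) :
    |erwLogLik X (p + d) n ω - erwLogLik X p n ω -
        (d * (2 * erwP X (2 * p - 1) n ω) - d ^ 2 / 2 * erwV X n ω)| ≤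
      10 / (1 - |2 * p - 1|) ^ 2 * (d ^ 2 * ∑ k ∈ Icc 1 (n - 1), |erwS X k ω / k| ^ 3) := by
  set a := 2 * p - 1 with ha
  have hshift : 2 * (p + d) - 1 = a + 2 * d := by rw [ha]; ring
  have h2d : |2 * d| ≤ (1 - |a|) / 2 := by rw [abs_mul, abs_two]; linarith
  have hsmall : |a + 2 * d| < 1 := (abs_add_le a (2 * d)).trans_lt (by linarith)
  have hsum : erwLogLik X (p + d) n ω - erwLogLik X p n ω -
        (d * (2 * erwP X a n ω) - d ^ 2 / 2 * erwV X n ω) =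
      ∑ k ∈ Icc 1 (n - 1),
        (Real.log (1 + (a + 2 * d) * erwSignedMean X k ω) -
          Real.log (1 + a * erwSignedMean X k ω) -
          (2 * d * (erwSignedMean X k ω / (1 + a * erwSignedMean X k ω)) -
            (2 * d) ^ 2 * erwSignedMean X k ω ^ 2 / 2)) := by
    rw [erwLogLik_eq_sum_erwSignedMean hX (by rwa [hshift]), erwLogLik_eq_sum_erwSignedMean hX hp,
      erwP_eq_sum_erwSignedMean hX hp, erwV_eq_sum_erwSignedMean hX, hshift, ← ha]
    simp only [sum_sub_distrib, ← mul_sum, ← sum_div]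
    ring
  rw [hsum, mul_sum, mul_sum]
  refine (abs_sum_le_sum_abs _ _).trans (sum_le_sum fun k _ => ?_)
  refine (abs_log_add_sub_log_sub_le hp (abs_erwSignedMean_le_one hX k) h2d).trans_eq ?_
  rw [abs_erwSignedMean hX]
  ring

end Path

section Walk

variable {m0 : MeasurableSpace Ω} {μ : Measure Ω} {ℱ : Filtration ℕ m0} {X : ℕ → Ω → ℝ} {p : ℝ}

namespace IsERW

lemma step_eq (hERW : IsERW μ ℱ X p) {ω : Ω} (n : ℕ) (hn : 1 ≤ n) : X n ω = 1 ∨ X n ω = -1 :=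
  hERW.2.2.1 n hn ω

lemma measurable_step (hERW : IsERW μ ℱ X p) {n : ℕ} (hn : 1 ≤ n) : Measurable[ℱ n] (X n) :=
  hERW.2.2.2.1 n hn

lemma condExp_step (hERW : IsERW μ ℱ X p) {n : ℕ} (hn : 1 ≤ n) :
    μ[X (n + 1) | ℱ n] =ᵐ[μ] fun ω => (2 * p - 1) * (erwS X n ω / n) :=
  hERW.2.2.2.2 n hn

lemma measurable_erwS (hERW : IsERW μ ℱ X p) (n : ℕ) : Measurable[ℱ n] (erwS X n) :=
  Finset.measurable_fun_sum _ fun _ hk =>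
    (hERW.measurable_step (mem_Icc.1 hk).1).mono (ℱ.mono (mem_Icc.1 hk).2) le_rfl

lemma stronglyMeasurable_erwS (hERW : IsERW μ ℱ X p) (n : ℕ) : StronglyMeasurable[ℱ n] (erwS X n) :=
  (hERW.measurable_erwS n).stronglyMeasurable

lemma memLp_top_step (hERW : IsERW μ ℱ X p) {n : ℕ} (hn : 1 ≤ n) : MemLp (X n) ∞ μ :=
  memLp_top_of_bound ((hERW.measurable_step hn).mono (ℱ.le n) le_rfl).aestronglyMeasurable 1 <|
    ae_of_all _ fun ω => by rcases hERW.step_eq n hn (ω := ω) with h | h <;> simp [h]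

lemma memLp_top_erwS (hERW : IsERW μ ℱ X p) (n : ℕ) : MemLp (erwS X n) ∞ μ :=
  memLp_top_of_bound ((hERW.measurable_erwS n).mono (ℱ.le n) le_rfl).aestronglyMeasurable n <|
    ae_of_all _ fun _ => abs_erwS_le hERW.step_eq n

variable [IsFiniteMeasure μ]

lemma integrable_step (hERW : IsERW μ ℱ X p) {n : ℕ} (hn : 1 ≤ n) : Integrable (X n) μ :=
  (hERW.memLp_top_step hn).integrable le_top

lemma integrable_erwS (hERW : IsERW μ ℱ X p) (n : ℕ) : Integrable (erwS X n) μ :=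
  (hERW.memLp_top_erwS n).integrable le_top

lemma integrable_erwS_mul_step (hERW : IsERW μ ℱ X p) (n : ℕ) :
    Integrable (erwS X n * X (n + 1)) μ :=
  ((hERW.memLp_top_step (by omega)).mul (hERW.memLp_top_erwS n)).integrable le_top

lemma integrable_erwS_sq (hERW : IsERW μ ℱ X p) (n : ℕ) :
    Integrable (fun ω => erwS X n ω ^ 2) μ :=
  ((hERW.memLp_top_erwS n).mono_exponent le_top).integrable_sq

lemma condExp_erwS_succ (hERW : IsERW μ ℱ X p) {n : ℕ} (hn : 1 ≤ n) :
    μ[erwS X (n + 1) | ℱ n] =ᵐ[μ] (1 + (2 * p - 1) / n) • erwS X n := by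
  have hsucc : erwS X (n + 1) = erwS X n + X (n + 1) := funext (erwS_succ X n)
  rw [hsucc]
  filter_upwards [condExp_add (hERW.integrable_erwS n) (hERW.integrable_step n.succ_pos) (ℱ n),
    hERW.condExp_step hn] with ω hadd hstep
  rw [hadd, Pi.add_apply, hstep,
    condExp_of_stronglyMeasurable (ℱ.le n) (hERW.stronglyMeasurable_erwS n)
      (hERW.integrable_erwS n),
    Pi.smul_apply, smul_eq_mul]
  ring

lemma integral_erwS_mul_step (hERW : IsERW μ ℱ X p) {n : ℕ} (hn : 1 ≤ n) :
    ∫ ω, erwS X n ω * X (n + 1) ω ∂μ = (2 * p - 1) / n * ∫ ω, erwS X n ω ^ 2 ∂μ := by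
  have hpull := condExp_mul_of_stronglyMeasurable_left (hERW.stronglyMeasurable_erwS n)
    (hERW.integrable_erwS_mul_step n) (hERW.integrable_step (by omega))
  calc ∫ ω, erwS X n ω * X (n + 1) ω ∂μ = ∫ ω, (μ[erwS X n * X (n + 1) | ℱ n]) ω ∂μ :=
        (integral_condExp (ℱ.le n)).symm
    _ = ∫ ω, (2 * p - 1) / n * erwS X n ω ^ 2 ∂μ := by
        refine integral_congr_ae ?_
        filter_upwards [hpull, hERW.condExp_step hn] with ω hω hstep
        rw [hω, Pi.mul_apply, hstep]
        ring
    _ = _ := integral_const_mul _ _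

lemma martingale_erwS (hERW : IsERW μ ℱ X p) (hp : 1 / 2 ≤ p) :
    Martingale (fun n => (erwGrowth (2 * p - 1) n)⁻¹ • erwS X (n + 1))
      (shiftedFiltration ℱ) μ := by
  have ha : 0 ≤ 2 * p - 1 := by linarith
  exact martingale_inv_prod_smul (fun n => by positivity)
    (fun n => hERW.stronglyMeasurable_erwS (n + 1)) (fun n => hERW.integrable_erwS (n + 1))
    fun n => hERW.condExp_erwS_succ (by omega)

lemma integral_erwS_succ_sq (hERW : IsERW μ ℱ X p) {n : ℕ} (hn : 1 ≤ n) :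
    ∫ ω, erwS X (n + 1) ω ^ 2 ∂μ =
      (1 + 2 * (2 * p - 1) / n) * ∫ ω, erwS X n ω ^ 2 ∂μ + μ.real Set.univ := by
  have hsq : ∀ ω, erwS X (n + 1) ω ^ 2 = erwS X n ω ^ 2 + 2 * (erwS X n ω * X (n + 1) ω) + 1 := by
    intro ω
    rw [erwS_succ]
    rcases hERW.step_eq (n + 1) (by omega) (ω := ω) with h | h <;> rw [h] <;> ring
  have hcross : Integrable (fun ω => 2 * (erwS X n ω * X (n + 1) ω)) μ :=
    (hERW.integrable_erwS_mul_step n).const_mul 2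
  simp_rw [hsq]
  rw [integral_add (by exact (hERW.integrable_erwS_sq n).add hcross) (integrable_const 1),
    integral_add (hERW.integrable_erwS_sq n) hcross, integral_const_mul,
    hERW.integral_erwS_mul_step hn, integral_const, smul_eq_mul]
  ring

lemma exists_integral_erwS_sq_le (hERW : IsERW μ ℱ X p) (hp : 3 / 4 < p) :
    ∃ R, 0 ≤ R ∧ ∀ n : ℕ, 1 ≤ n → ∫ ω, erwS X n ω ^ 2 ∂μ ≤ R * (n : ℝ) ^ (2 * (2 * p - 1)) := by
  have hq : 1 < 2 * (2 * p - 1) := by linarith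
  have h1 : 0 ≤ ∫ ω, erwS X 1 ω ^ 2 ∂μ := integral_nonneg fun ω => sq_nonneg _
  have hmass : 0 ≤ μ.real Set.univ := measureReal_nonneg
  exact ⟨_, add_nonneg h1 (div_nonneg hmass (sub_pos.2 hq).le), fun n hn =>
    le_mul_rpow_of_le_one_add_div_mul_add (u := fun n => ∫ ω, erwS X n ω ^ 2 ∂μ) hq
      hmass h1 (fun n hn => (hERW.integral_erwS_succ_sq hn).le) hn⟩

lemma exists_integral_inv_erwGrowth_smul_sq_le (hERW : IsERW μ ℱ X p) (hp : 3 / 4 < p) :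
    ∃ R, ∀ n, ∫ ω, ((erwGrowth (2 * p - 1) n)⁻¹ • erwS X (n + 1)) ω ^ 2 ∂μ ≤ R := by
  set a := 2 * p - 1
  have ha0 : 0 ≤ a := by linarith
  obtain ⟨R, hR0, hR⟩ := hERW.exists_integral_erwS_sq_le hp
  refine ⟨R, fun n => ?_⟩
  have hgrowth : ((n + 1 : ℕ) : ℝ) ^ (2 * a) ≤ erwGrowth a n ^ 2 := by
    rw [mul_comm, Real.rpow_mul (by positivity), Real.rpow_two]
    gcongr
    exact rpow_le_erwGrowth ha0 (by linarith [hERW.2.1]) n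
  simp_rw [Pi.smul_apply, smul_eq_mul, mul_pow, inv_pow]
  rw [integral_const_mul, inv_mul_le_iff₀ (pow_pos (erwGrowth_pos ha0 n) 2), mul_comm]
  exact (hR (n + 1) n.succ_pos).trans (by gcongr)

lemma ae_exists_forall_abs_erwS_le (hERW : IsERW μ ℱ X p) (hp : 3 / 4 < p) :
    ∀ᵐ ω ∂μ, ∃ C, ∀ n : ℕ, |erwS X n ω| ≤ C * (n : ℝ) ^ (2 * p - 1) := by
  have ha0 : 0 ≤ 2 * p - 1 := by linarith
  obtain ⟨R, hR⟩ := hERW.exists_integral_inv_erwGrowth_smul_sq_le hp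
  have hsq : ∀ n, Integrable
      (fun ω => ((erwGrowth (2 * p - 1) n)⁻¹ • erwS X (n + 1)) ω ^ 2) μ := fun n => by
    simp_rw [Pi.smul_apply, smul_eq_mul, mul_pow]
    exact (hERW.integrable_erwS_sq (n + 1)).const_mul _
  filter_upwards [ae_exists_forall_abs_le_of_martingale (hERW.martingale_erwS (by linarith)) hsq hR]
    with ω ⟨C, hC⟩
  have hC0 : 0 ≤ C := (abs_nonneg _).trans (hC 0)
  refine ⟨C * Real.exp (2 * p - 1), fun n => ?_⟩
  rcases n with _ | n
  · simp only [erwS, Icc_eq_empty_of_lt one_pos, sum_empty, abs_zero]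
    positivity
  · have hgrowth := erwGrowth_pos ha0 n
    have hCn := hC n
    rw [Pi.smul_apply, smul_eq_mul, abs_mul, abs_inv, abs_of_pos hgrowth,
      inv_mul_le_iff₀ hgrowth] at hCn
    calc |erwS X (n + 1) ω| ≤ erwGrowth (2 * p - 1) n * C := hCn
      _ ≤ Real.exp (2 * p - 1) * ((n + 1 : ℕ) : ℝ) ^ (2 * p - 1) * C := by
          gcongr; exact erwGrowth_le_exp_mul_rpow ha0 n
      _ = C * Real.exp (2 * p - 1) * ((n + 1 : ℕ) : ℝ) ^ (2 * p - 1) := by ring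

end IsERW

end Walk

lemma erwLogLik_expansion_of_abs_erwS_le {X : ℕ → Ω → ℝ} {ω : Ω} {p C : ℝ}
    (hX : ∀ n, 1 ≤ n → X n ω = 1 ∨ X n ω = -1) (hp : 3 / 4 < p) (hp' : p < 1)
    (hS : ∀ n : ℕ, |erwS X n ω| ≤ C * (n : ℝ) ^ (2 * p - 1))
    {d : ℕ → ℝ} (hd : d =O[atTop] fun n : ℕ => (n : ℝ) ^ (-(4 * p - 3) / 2)) :
    (fun n => erwLogLik X (p + d n) n ω - erwLogLik X p n ω -
      (d n * (2 * erwP X (2 * p - 1) n ω) - d n ^ 2 / 2 * erwV X n ω)) =o[atTop]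
      fun _ => (1 : ℝ) := by
  have hp1 : |2 * p - 1| < 1 := abs_lt.2 ⟨by linarith, by linarith⟩
  have hd0 : Tendsto d atTop (𝓝 0) := by
    refine hd.trans_tendsto ?_
    simp_rw [neg_div]
    exact (tendsto_rpow_neg_atTop (by linarith)).comp tendsto_natCast_atTop_atTop
  have hd_small : ∀ᶠ n in atTop, |d n| ≤ (1 - |2 * p - 1|) / 4 :=
    (by simpa using hd0.abs : Tendsto (fun n => |d n|) atTop (𝓝 0)).eventually_le_const
      (by linarith)
  have hcube := isLittleO_sum_abs_div_pow_three (by linarith) (by linarith) hS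
  have hscale : (fun n : ℕ => ((n : ℝ) ^ (-(4 * p - 3) / 2)) ^ 2 * (n : ℝ) ^ (2 * (2 * p - 1) - 1))
      =ᶠ[atTop] fun _ => (1 : ℝ) := by
    filter_upwards [eventually_gt_atTop 0] with n hn
    rw [← Real.rpow_mul_natCast n.cast_nonneg, ← Real.rpow_add (by positivity)]
    convert Real.rpow_zero (n : ℝ) using 2
    push_cast
    ring
  refine IsBigO.trans_isLittleO (.of_bound (10 / (1 - |2 * p - 1|) ^ 2) ?_)
    (((hd.pow 2).mul_isLittleO hcube).trans_eventuallyEq hscale)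
  filter_upwards [hd_small] with n hn
  rw [Real.norm_of_nonneg (by positivity : (0 : ℝ) ≤ d n ^ 2 * _)]
  exact abs_erwLogLik_add_sub_le hX hp1 hn n

theorem erw_lamn_superdiffusive_general {m0 : MeasurableSpace Ω} (μ : Measure Ω)
    [IsFiniteMeasure μ] (ℱ : Filtration ℕ m0) (X : ℕ → Ω → ℝ) (p : ℝ) (hERW : IsERW μ ℱ X p)
    (hp : 3 / 4 < p) (hp' : p < 1) :
    ∀ᵐ ω ∂μ, ∀ hn : ℕ → ℝ, hn =O[atTop] (fun _ => (1 : ℝ)) → Tendsto (fun n =>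
        (erwLogLik X (p + hn n * (n : ℝ) ^ (-(4 * p - 3) / 2)) n ω - erwLogLik X p n ω) -
          (hn n * (2 * erwP X (2 * p - 1) n ω / (n : ℝ) ^ ((4 * p - 3) / 2)) -
            hn n ^ 2 / 2 * (erwV X n ω / (n : ℝ) ^ (4 * p - 3))))
      atTop (𝓝 0) := by
  filter_upwards [hERW.ae_exists_forall_abs_erwS_le hp] with ω ⟨C, hS⟩ hn hbdd
  have hd : (fun n : ℕ => hn n * (n : ℝ) ^ (-(4 * p - 3) / 2)) =O[atTop]
      fun n : ℕ => (n : ℝ) ^ (-(4 * p - 3) / 2) := by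
    simpa using hbdd.mul (isBigO_refl (fun n : ℕ => (n : ℝ) ^ (-(4 * p - 3) / 2)) atTop)
  have hexpansion := erwLogLik_expansion_of_abs_erwS_le hERW.step_eq hp hp' hS hd
  refine ((isLittleO_one_iff ℝ).1 hexpansion).congr fun n => ?_
  have hhalf : (n : ℝ) ^ (-(4 * p - 3) / 2) = ((n : ℝ) ^ ((4 * p - 3) / 2))⁻¹ := by
    rw [neg_div, Real.rpow_neg n.cast_nonneg]
  have hsq : (n : ℝ) ^ (4 * p - 3) = ((n : ℝ) ^ ((4 * p - 3) / 2)) ^ 2 := by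
    rw [← Real.rpow_mul_natCast n.cast_nonneg]
    congr 1
    push_cast
    ring
  rw [hhalf, hsq]
  ring

/-- Local asymptotic mixed normality expansion in the superdiffusive regime `3/4 < p < 1`:
almost surely, `ℓ_n(p + h_n n^{-(4p-3)/2}) - ℓ_n(p) = h_n Δ_n(p) - (h_n²/2) J_n(p) + o(1)`,
where `Δ_n(p) = 2 P_n / n^{(4p-3)/2}` and `J_n(p) = V_n / n^{4p-3}`. -/
theorem erw_lamn_superdiffusive
    {m0 : MeasurableSpace Ω} (μ : Measure Ω) [IsProbabilityMeasure μ]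
    (ℱ : Filtration ℕ m0) (X : ℕ → Ω → ℝ) (p : ℝ)
    (hERW : IsERW μ ℱ X p) (hp : 3 / 4 < p) (hp' : p < 1)
    (hn : ℕ → ℝ) (h : ℝ) (hconv : Tendsto hn atTop (𝓝 h)) :
    ∀ᵐ ω ∂μ, Tendsto (fun n =>
        (erwLogLik X (p + hn n * (n : ℝ) ^ (-(4 * p - 3) / 2)) n ω - erwLogLik X p n ω) -
          (hn n * (2 * erwP X (2 * p - 1) n ω / (n : ℝ) ^ ((4 * p - 3) / 2)) -
            hn n ^ 2 / 2 * (erwV X n ω / (n : ℝ) ^ (4 * p - 3))))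
      atTop (𝓝 0) := by
  filter_upwards [erw_lamn_superdiffusive_general μ ℱ X p hERW hp hp'] with ω hω
  exact hω hn (hconv.isBigO_one ℝ)
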